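/- The generalized hypergeometric series ₄F₃(1/4, 1/4, 1/4, 3/4; 1/2, 5/4, 5/4; 1/16) equals (1/2)·[π²·(1/10 − 1/(3√3)) + (1/(2√3))·ψ′(1/3)], where ψ′(1/3) = 9·∑_{k≥0} 1/(3k+1)². Concretely, the sum over n ≥ 0 of ((1/4)ₙ)³·(3/4)ₙ / ((1/2)ₙ·((5/4)ₙ)²·n!) · (1/16)ⁿ equals (1/2)·[π²·(1/10 − 1/(3√3)) + (9/(2√3))·∑_{k≥0} 1/(3k+1)²]. -/

import Mathlib

open Real

/-- The Pochhammer symbol (shifted factorial) `(a)ₙ` for a real number `a`. -/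
noncomputable def poch (a : ℝ) (n : ℕ) : ℝ := Polynomial.eval a (ascPochhammer ℝ n)

/-- The real power series with coefficients `a`. -/
noncomputable def pser (a : ℕ → ℝ) (x : ℝ) : ℝ := ∑' n, a n * x ^ n

lemma pser_summable {a : ℕ → ℝ} (ha : ∀ n, |a n| ≤ 1) {x : ℝ} (hx : |x| < 1) :
    Summable (fun n => a n * x ^ n) := by
  refine Summable.of_norm_bounded (g := fun n => |x| ^ n)
    (summable_geometric_of_lt_one (abs_nonneg x) hx) (fun n => ?_)
  rw [norm_mul, Real.norm_eq_abs, norm_pow, Real.norm_eq_abs]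
  exact mul_le_of_le_one_left (by positivity) (ha n)

lemma pser_summable' {a : ℕ → ℝ} (ha : ∀ n, |a n| ≤ 1) {x : ℝ} (hx : |x| < 1) :
    Summable (fun n : ℕ => (n * a n) * x ^ n) := by
  have h := summable_pow_mul_geometric_of_norm_lt_one (R := ℝ) 1 (r := |x|) (by simpa using hx)
  refine Summable.of_norm_bounded h (fun n => ?_)
  rw [norm_mul, norm_mul, Real.norm_eq_abs (a n), norm_pow, Real.norm_eq_abs x, pow_one,
    RCLike.norm_natCast]
  refine mul_le_mul_of_nonneg_right ?_ (by positivity)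
  exact mul_le_of_le_one_right (by positivity) (ha n)

lemma pser_hasDerivAt {a : ℕ → ℝ} (ha : ∀ n, |a n| ≤ 1) {x : ℝ} (hx : |x| < 1) :
    ∃ D, HasDerivAt (pser a) D x ∧ x * D = pser (fun n => n * a n) x ∧
      D = ∑' n : ℕ, ((n + 1 : ℕ) * a (n + 1)) * x ^ n := by
  obtain ⟨r, hxr, hr1⟩ := exists_between hx
  have hr0 : 0 < r := lt_of_le_of_lt (abs_nonneg x) hxr
  have hu : Summable (fun n : ℕ => (n : ℝ) * r ^ (n - 1)) := by
    have h := summable_pow_mul_geometric_of_norm_lt_one (R := ℝ) 1 (r := r)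
      (by rw [Real.norm_eq_abs, abs_of_pos hr0]; exact hr1)
    refine (h.mul_left r⁻¹).congr (fun n => ?_)
    cases n with
    | zero => simp
    | succ n => simp only [pow_one, Nat.add_sub_cancel]; rw [pow_succ]; field_simp
  have key : HasDerivAt (fun z => ∑' n : ℕ, a n * z ^ n)
      (∑' n : ℕ, a n * ((n : ℝ) * x ^ (n - 1))) x := by
    refine hasDerivAt_tsum_of_isPreconnected (t := Metric.ball (0:ℝ) r) (y₀ := 0)
      (g' := fun n z => a n * ((n : ℝ) * z ^ (n - 1))) hu
      Metric.isOpen_ball (convex_ball _ _).isPreconnected ?_ ?_ ?_ ?_ ?_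
    · intro n y _
      exact (hasDerivAt_pow n y).const_mul (a n)
    · intro n y hy
      have hy' : |y| < r := by simpa using hy
      rw [norm_mul, norm_mul, Real.norm_eq_abs (a n), norm_pow, Real.norm_eq_abs y,
        RCLike.norm_natCast]
      calc |a n| * (n * |y| ^ (n - 1)) ≤ 1 * (n * |y| ^ (n - 1)) :=
            mul_le_mul_of_nonneg_right (ha n) (by positivity)
        _ ≤ n * r ^ (n - 1) := by rw [one_mul]; gcongr
    · simpa using hr0
    · exact pser_summable ha (by simp)
    · simpa using hxr
  refine ⟨_, key, ?_, ?_⟩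
  · unfold pser
    rw [← tsum_mul_left]
    refine tsum_congr (fun n => ?_)
    cases n with
    | zero => simp
    | succ n => simp only [Nat.add_sub_cancel]; ring
  · have hs : Summable (fun n : ℕ => a n * ((n : ℝ) * x ^ (n - 1))) := by
      refine Summable.of_norm_bounded hu (fun n => ?_)
      rw [norm_mul, norm_mul, Real.norm_eq_abs (a n), norm_pow, Real.norm_eq_abs x,
        RCLike.norm_natCast]
      calc |a n| * (n * |x| ^ (n - 1)) ≤ 1 * (n * |x| ^ (n - 1)) :=
            mul_le_mul_of_nonneg_right (ha n) (by positivity)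
        _ ≤ n * r ^ (n - 1) := by rw [one_mul]; gcongr
    rw [hs.tsum_eq_zero_add]
    simp only [Nat.cast_zero, zero_mul, mul_zero, zero_add, Nat.add_sub_cancel]
    exact tsum_congr (fun n => by ring)

lemma pser_zero (a : ℕ → ℝ) : pser a 0 = a 0 := by
  unfold pser
  rw [tsum_eq_single 0 (fun n hn => by simp [hn])]
  simp

lemma const_tool {f : ℝ → ℝ} {a b : ℝ} (hab : a < b) (hc : ContinuousOn f (Set.Icc a b))
    (hd : ∀ x ∈ Set.Ioo a b, HasDerivAt f 0 x) : f b = f a := by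
  obtain ⟨c, _, h⟩ := exists_hasDerivAt_eq_slope f (fun _ => 0) hab hc hd
  have : b - a ≠ 0 := by linarith
  rw [eq_div_iff this] at h
  linarith

lemma pser_continuousOn {a : ℕ → ℝ} (ha : ∀ n : ℕ, |a n| ≤ 1 / (n : ℝ) ^ 2) :
    ContinuousOn (pser a) (Set.Icc (-1) 1) := by
  unfold pser
  refine continuousOn_tsum (fun n => by fun_prop) hasSum_zeta_two.summable (fun n x hx => ?_)
  rw [norm_mul, Real.norm_eq_abs, norm_pow, Real.norm_eq_abs]
  exact (mul_le_of_le_one_right (abs_nonneg _)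
    (pow_le_one₀ (abs_nonneg _) (abs_le.2 hx))).trans (ha n)

lemma inv_sq_le_one (n : ℕ) : (1 : ℝ) / (n : ℝ) ^ 2 ≤ 1 := by
  rcases Nat.eq_zero_or_pos n with rfl | h
  · simp
  · have : (1:ℝ) ≤ n := by exact_mod_cast h
    rw [div_le_one (by positivity)]
    exact one_le_pow₀ this

/-- Normalised central binomial coefficients. -/
noncomputable def cbin (n : ℕ) : ℝ := (Nat.centralBinom n : ℝ) / 4 ^ n

lemma cbin_nonneg (n : ℕ) : 0 ≤ cbin n := by unfold cbin; positivity

lemma cbin_le_one (n : ℕ) : cbin n ≤ 1 := by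
  unfold cbin
  rw [div_le_one (by positivity)]
  have h := Nat.choose_le_two_pow (2 * n) n
  rw [pow_mul] at h
  exact_mod_cast h

lemma cbin_succ (n : ℕ) : ((n + 1 : ℕ) : ℝ) * cbin (n + 1) = n * cbin n + cbin n / 2 := by
  have h : ((n + 1 : ℕ) : ℝ) * (Nat.centralBinom (n + 1) : ℝ)
      = 2 * (2 * n + 1) * Nat.centralBinom n := by
    exact_mod_cast Nat.succ_mul_centralBinom_succ n
  unfold cbin
  rw [← mul_div_assoc, h, pow_succ]
  field_simp
  ring

lemma cbin_abs (n : ℕ) : |cbin n| ≤ 1 := by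
  rw [abs_of_nonneg (cbin_nonneg n)]; exact cbin_le_one n

lemma cbin_zero : cbin 0 = 1 := by simp [cbin]

lemma pser_cbin_deriv {x : ℝ} (hx : |x| < 1) :
    HasDerivAt (fun x => pser cbin x * √(1 - x)) 0 x := by
  obtain ⟨D, hD, hx1, hx2⟩ := pser_hasDerivAt cbin_abs hx
  have h1 : 0 < 1 - x := by have := (abs_lt.1 hx).2; linarith
  have hODE : D = x * D + pser cbin x / 2 := by
    rw [hx1]
    conv_lhs => rw [hx2]
    unfold pser
    rw [← tsum_div_const, ← (pser_summable' cbin_abs hx).tsum_add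
      ((pser_summable cbin_abs hx).div_const 2)]
    refine tsum_congr (fun n => ?_)
    rw [cbin_succ]; ring
  have h2 := hD.mul (((hasDerivAt_id x).const_sub 1).sqrt h1.ne')
  refine h2.congr_deriv ?_
  have hs : √(1 - x) ≠ 0 := (Real.sqrt_pos.2 h1).ne'
  have hss : √(1 - x) ^ 2 = 1 - x := Real.sq_sqrt h1.le
  simp only [id]
  field_simp
  rw [hss]
  linear_combination 2 * hODE

lemma pser_cbin {x : ℝ} (hx : |x| < 1) : pser cbin x = 1 / √(1 - x) := by
  have h1 : 0 < 1 - x := by have := (abs_lt.1 hx).2; linarith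
  have hs : √(1 - x) ≠ 0 := (Real.sqrt_pos.2 h1).ne'
  rw [eq_div_iff hs]
  have h0 : pser cbin 0 * √(1 - 0) = 1 := by simp [pser_zero, cbin_zero]
  have hx' := abs_lt.1 hx
  rcases lt_trichotomy x 0 with h | h | h
  · refine Eq.trans (const_tool (f := fun x => pser cbin x * √(1 - x)) h ?_ ?_).symm h0
    · intro y hy
      exact (pser_cbin_deriv (abs_lt.2 ⟨by linarith [hy.1], by linarith [hy.2]⟩)).continuousAt.continuousWithinAt
    · intro y hy
      exact pser_cbin_deriv (abs_lt.2 ⟨by linarith [hy.1], by linarith [hy.2]⟩)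
  · rw [h, h0]
  · refine Eq.trans (const_tool (f := fun x => pser cbin x * √(1 - x)) h ?_ ?_) h0
    · intro y hy
      exact (pser_cbin_deriv (abs_lt.2 ⟨by linarith [hy.1], by linarith [hy.2]⟩)).continuousAt.continuousWithinAt
    · intro y hy
      exact pser_cbin_deriv (abs_lt.2 ⟨by linarith [hy.1], by linarith [hy.2]⟩)

lemma odd_deriv {a : ℕ → ℝ} (ha : ∀ n : ℕ, |(2 * n + 1) * a n| ≤ 1) {e x : ℝ}
    (hx : |e * x ^ 2| < 1) :
    HasDerivAt (fun x => x * pser a (e * x ^ 2))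
      (pser (fun n => (2 * n + 1) * a n) (e * x ^ 2)) x := by
  have ha' : ∀ n, |a n| ≤ 1 := fun n => by
    refine le_trans ?_ (ha n)
    rw [abs_mul]
    refine le_mul_of_one_le_left (abs_nonneg _) ?_
    rw [abs_of_nonneg (by positivity)]
    linarith [(Nat.cast_nonneg n : (0:ℝ) ≤ n)]
  obtain ⟨D, hD, hx1, -⟩ := pser_hasDerivAt ha' hx
  have h := (hasDerivAt_id x).mul
    (hD.comp x ((hasDerivAt_pow 2 x).const_mul e))
  refine h.congr_deriv ?_
  simp only [id, Function.comp]
  have : pser (fun n => (2 * n + 1) * a n) (e * x ^ 2)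
      = 2 * pser (fun n => n * a n) (e * x ^ 2) + pser a (e * x ^ 2) := by
    unfold pser
    rw [← tsum_mul_left, ← ((pser_summable' ha' hx).mul_left 2).tsum_add (pser_summable ha' hx)]
    exact tsum_congr (fun n => by ring)
  rw [this, ← hx1]
  push_cast
  ring

/-- coefficients `cbin n / (2n+1)` -/
noncomputable def cb1 (n : ℕ) : ℝ := cbin n / (2 * n + 1)
/-- coefficients `cbin n / (2n+1)^2` -/
noncomputable def cb2 (n : ℕ) : ℝ := cbin n / (2 * n + 1) ^ 2

lemma cb1_mul (n : ℕ) : (2 * n + 1) * cb1 n = cbin n := by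
  unfold cb1; field_simp

lemma cb2_mul (n : ℕ) : (2 * n + 1) * cb2 n = cb1 n := by
  unfold cb1 cb2; field_simp

lemma cb1_abs (n : ℕ) : |cb1 n| ≤ 1 := by
  have h := cbin_abs n
  rw [← cb1_mul, abs_mul] at h
  refine le_trans (le_mul_of_one_le_left (abs_nonneg _) ?_) h
  rw [abs_of_nonneg (by positivity)]
  linarith [(Nat.cast_nonneg n : (0:ℝ) ≤ n)]

lemma cb2_abs (n : ℕ) : |cb2 n| ≤ 1 := by
  have h := cb1_abs n
  rw [← cb2_mul, abs_mul] at h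
  refine le_trans (le_mul_of_one_le_left (abs_nonneg _) ?_) h
  rw [abs_of_nonneg (by positivity)]
  linarith [(Nat.cast_nonneg n : (0:ℝ) ≤ n)]

lemma cb1_deriv {e x : ℝ} (hx : |e * x ^ 2| < 1) :
    HasDerivAt (fun x => x * pser cb1 (e * x ^ 2)) (1 / √(1 - e * x ^ 2)) x := by
  have h := odd_deriv (a := cb1) (fun n => by rw [cb1_mul]; exact cbin_abs n) hx
  simp only [cb1_mul] at h
  rwa [← pser_cbin hx]

/-- `∫ arcsin t / t` resp. `∫ arsinh t / t` -/
noncomputable def Aser (e x : ℝ) : ℝ := x * pser cb2 (e * x ^ 2)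

lemma Aser_deriv {e x : ℝ} (hx : |e * x ^ 2| < 1) :
    HasDerivAt (Aser e) (pser cb1 (e * x ^ 2)) x := by
  have h := odd_deriv (a := cb2) (fun n => by rw [cb2_mul]; exact cb1_abs n) hx
  simp only [cb2_mul] at h
  exact h

lemma arcsin_ser {x : ℝ} (h0 : 0 ≤ x) (h1 : x < 1) : x * pser cb1 (1 * x ^ 2) = arcsin x := by
  rcases h0.eq_or_lt with rfl | h0
  · simp
  have hb : ∀ y ∈ Set.Icc 0 x, |1 * y ^ 2| < 1 := fun y hy => by
    rw [one_mul, abs_of_nonneg (by positivity)]; nlinarith [hy.1, hy.2]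
  have hd : ∀ y ∈ Set.Icc 0 x,
      HasDerivAt (fun y => y * pser cb1 (1 * y ^ 2) - arcsin y) 0 y := fun y hy => by
    refine ((cb1_deriv (hb y hy)).sub (hasDerivAt_arcsin (by linarith [hy.1])
      (by linarith [hy.2]))).congr_deriv (by simp)
  have := const_tool h0 (fun y hy => (hd y hy).continuousAt.continuousWithinAt)
    (fun y hy => hd y (Set.Ioo_subset_Icc_self hy))
  simp at this
  simp
  linarith

lemma arsinh_ser {x : ℝ} (h0 : 0 ≤ x) (h1 : x < 1) : x * pser cb1 (-1 * x ^ 2) = arsinh x := by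
  rcases h0.eq_or_lt with rfl | h0
  · simp
  have hb : ∀ y ∈ Set.Icc 0 x, |-1 * y ^ 2| < 1 := fun y hy => by
    rw [neg_one_mul, abs_neg, abs_of_nonneg (by positivity)]; nlinarith [hy.1, hy.2]
  have hd : ∀ y ∈ Set.Icc 0 x,
      HasDerivAt (fun y => y * pser cb1 (-1 * y ^ 2) - arsinh y) 0 y := fun y hy => by
    refine ((cb1_deriv (hb y hy)).sub (hasDerivAt_arsinh y)).congr_deriv (by simp)
  have := const_tool h0 (fun y hy => (hd y hy).continuousAt.continuousWithinAt)
    (fun y hy => hd y (Set.Ioo_subset_Icc_self hy))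
  simp at this
  simp
  linarith

lemma Aser_sin_deriv {t : ℝ} (h0 : 0 < t) (h1 : t < π / 2) :
    HasDerivAt (fun t => Aser 1 (sin t)) (t * cos t / sin t) t := by
  have hs : 0 < sin t := sin_pos_of_pos_of_lt_pi h0 (by linarith)
  have hc : 0 < cos t := cos_pos_of_mem_Ioo ⟨by linarith, h1⟩
  have hs1 : sin t < 1 := by nlinarith [sin_sq_add_cos_sq t]
  have hb : |1 * sin t ^ 2| < 1 := by
    rw [one_mul, abs_of_nonneg (by positivity)]; nlinarith
  refine ((Aser_deriv hb).comp t (hasDerivAt_sin t)).congr_deriv ?_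
  have := arcsin_ser hs.le hs1
  rw [arcsin_sin (by linarith) h1.le] at this
  rw [eq_div_iff hs.ne']
  linear_combination cos t * this

lemma Aser_sinh_deriv {t : ℝ} (h0 : 0 < t) (h1 : sinh t < 1) :
    HasDerivAt (fun t => Aser (-1) (sinh t)) (t * cosh t / sinh t) t := by
  have hs : 0 < sinh t := sinh_pos_iff.2 h0
  have hb : |-1 * sinh t ^ 2| < 1 := by
    rw [neg_one_mul, abs_neg, abs_of_nonneg (by positivity)]; nlinarith
  refine ((Aser_deriv hb).comp t (hasDerivAt_sinh t)).congr_deriv ?_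
  have := arsinh_ser hs.le h1
  rw [arsinh_sinh] at this
  rw [eq_div_iff hs.ne']
  linear_combination cosh t * this

lemma even_dup {f : ℕ → ℝ} (hf : Summable f) :
    ∑' n, f n + ∑' n, (-1) ^ n * f n = 2 * ∑' n, f (2 * n) := by
  have h2 : Summable (fun n => (-1) ^ n * f n) := by
    refine Summable.of_norm_bounded hf.norm (fun n => ?_)
    rw [norm_mul, norm_pow, norm_neg, norm_one, one_pow, one_mul]
  have hi : Function.Injective (fun n : ℕ => 2 * n) := fun a b h => by
    have h' : 2 * a = 2 * b := h
    omega
  have ho : Function.Injective (fun n : ℕ => 2 * n + 1) := fun a b h => by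
    have h' : 2 * a + 1 = 2 * b + 1 := h
    omega
  have e1 := tsum_even_add_odd (f := f) (hf.comp_injective hi) (hf.comp_injective ho)
  have e2 := tsum_even_add_odd (f := fun n => (-1) ^ n * f n) (h2.comp_injective hi)
    (h2.comp_injective ho)
  have e3 : ∑' k, (-1 : ℝ) ^ (2 * k) * f (2 * k) = ∑' k, f (2 * k) :=
    tsum_congr (fun k => by rw [pow_mul]; norm_num)
  have e4 : ∑' k, (-1 : ℝ) ^ (2 * k + 1) * f (2 * k + 1) = - ∑' k, f (2 * k + 1) := by
    rw [← tsum_neg]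
    exact tsum_congr (fun k => by rw [pow_succ, pow_mul]; norm_num)
  rw [e3, e4] at e2
  linarith

/-- The dilogarithm. -/
noncomputable def Li (x : ℝ) : ℝ := pser (fun n : ℕ => 1 / (n : ℝ) ^ 2) x

lemma Li_coef_abs (n : ℕ) : |1 / (n : ℝ) ^ 2| ≤ 1 / (n : ℝ) ^ 2 := by
  rw [abs_of_nonneg (by positivity)]

lemma Li_continuousOn : ContinuousOn Li (Set.Icc (-1) 1) := pser_continuousOn Li_coef_abs

lemma Li_zero : Li 0 = 0 := by simp [Li, pser_zero]

lemma Li_one : Li 1 = π ^ 2 / 6 := by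
  simp only [Li, pser, one_pow, mul_one]
  exact hasSum_zeta_two.tsum_eq

lemma Li_deriv {x : ℝ} (hx : |x| < 1) (h0 : x ≠ 0) :
    HasDerivAt Li (-log (1 - x) / x) x := by
  obtain ⟨D, hD, h1, -⟩ := pser_hasDerivAt (fun n => (Li_coef_abs n).trans (inv_sq_le_one n)) hx
  refine HasDerivAt.congr_deriv hD ?_
  rw [eq_div_iff h0, mul_comm, h1]
  have h := hasSum_pow_div_log_of_abs_lt_one hx
  rw [← h.tsum_eq]
  unfold pser
  have hs := pser_summable' (fun n => (Li_coef_abs n).trans (inv_sq_le_one n)) hx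
  rw [hs.tsum_eq_zero_add]
  simp only [Nat.cast_zero, zero_mul, zero_add]
  refine tsum_congr (fun n => ?_)
  push_cast
  have : (n : ℝ) + 1 ≠ 0 := by positivity
  field_simp

lemma loglog_cont : ContinuousOn (fun x : ℝ => log x * log (1 - x)) (Set.Icc 0 (1/2)) := by
  intro x hx
  rcases hx.1.eq_or_lt with h | h
  · subst h
    have hb : ∀ y ∈ Set.Icc (0:ℝ) (1/2), |log y * log (1 - y)| ≤ 2 * |y * log y| := by
      intro y hy
      have h1 : 0 < 1 - y := by linarith [hy.2]
      have hl : log (1 - y) ≤ 0 := log_nonpos h1.le (by linarith [hy.1])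
      have hl2 := Real.one_sub_inv_le_log_of_pos h1
      have hl3 : |log (1 - y)| ≤ 2 * y := by
        rw [abs_of_nonpos hl]
        have : (1 - y)⁻¹ ≤ 1 + 2 * y := by
          rw [inv_le_iff_one_le_mul₀ h1]; nlinarith [hy.1, hy.2]
        linarith
      rw [abs_mul, abs_mul, abs_of_nonneg hy.1]
      nlinarith [abs_nonneg (log y)]
    have hc : Filter.Tendsto (fun y : ℝ => 2 * |y * log y|) (nhdsWithin 0 (Set.Icc 0 (1/2)))
        (nhds 0) := by
      have := (continuous_const (y := (2:ℝ))).mul continuous_mul_log.abs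
      have h : Filter.Tendsto (fun y : ℝ => 2 * |y * log y|) (nhds 0) (nhds (2 * |0 * log 0|)) :=
        this.tendsto 0
      simp only [zero_mul, abs_zero, mul_zero] at h
      exact h.mono_left nhdsWithin_le_nhds
    unfold ContinuousWithinAt
    simp only [log_zero, zero_mul]
    refine squeeze_zero_norm' ?_ hc
    filter_upwards [self_mem_nhdsWithin] with y hy
    exact hb y hy
  · have h1 : 1 - x ≠ 0 := by linarith [hx.2]
    exact ((continuousAt_log h.ne').mul
      (((continuous_const.sub continuous_id).continuousAt).log h1)).continuousWithinAt

lemma Li_euler {x : ℝ} (h0 : 0 < x) (h1 : x ≤ 1 / 2) :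
    Li x + Li (1 - x) + log x * log (1 - x) = π ^ 2 / 6 := by
  have key := const_tool (f := fun x => Li x + Li (1 - x) + log x * log (1 - x)) h0 ?_ ?_
  · simpa [Li_zero, Li_one] using key
  · refine ContinuousOn.add (ContinuousOn.add ?_ ?_) ?_
    · exact Li_continuousOn.mono (fun y hy => ⟨by linarith [hy.1], by linarith [hy.2]⟩)
    · exact Li_continuousOn.comp (by fun_prop)
        (fun y hy => ⟨by linarith [hy.2], by linarith [hy.1]⟩)
    · exact loglog_cont.mono (fun y hy => ⟨by linarith [hy.1], by linarith [hy.2]⟩)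
  · intro y hy
    have hy0 := hy.1
    have hy1 : 0 < 1 - y := by linarith [hy.2]
    have d1 := Li_deriv (x := y) (abs_lt.2 ⟨by linarith, by linarith⟩) hy0.ne'
    have d2 := (Li_deriv (x := 1 - y) (abs_lt.2 ⟨by linarith, by linarith⟩) hy1.ne').comp y
      ((hasDerivAt_id y).const_sub 1)
    have d3 := (hasDerivAt_log hy0.ne').mul (((hasDerivAt_id y).const_sub 1).log hy1.ne')
    refine ((d1.add d2).add d3).congr_deriv ?_
    simp only [id, sub_sub_cancel]
    field_simp
    ring

lemma Li_landen {x : ℝ} (h0 : 0 < x) (h1 : x < 1) :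
    Li (-x) + Li (x / (1 + x)) + log (1 + x) ^ 2 / 2 = 0 := by
  have key := const_tool (f := fun x => Li (-x) + Li (x / (1 + x)) + log (1 + x) ^ 2 / 2) h0 ?_ ?_
  · simpa [Li_zero] using key
  · refine ContinuousOn.add (ContinuousOn.add ?_ ?_) ?_
    · exact Li_continuousOn.comp (by fun_prop)
        (fun y hy => ⟨by linarith [hy.2], by linarith [hy.1]⟩)
    · refine Li_continuousOn.comp (ContinuousOn.div (by fun_prop) (by fun_prop)
        (fun y hy => by linarith [hy.1])) (fun y hy => ?_)
      have : 0 < 1 + y := by linarith [hy.1]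
      constructor
      · have : 0 ≤ y / (1 + y) := div_nonneg hy.1 this.le
        linarith
      · rw [div_le_one this]; linarith
    · refine ContinuousOn.div_const (ContinuousOn.pow (ContinuousOn.log (by fun_prop)
        (fun y hy => by linarith [hy.1])) 2) _
  · intro y hy
    have hy0 := hy.1
    have hy1 : 0 < 1 + y := by linarith
    have hq : 0 < y / (1 + y) := div_pos hy0 hy1
    have hq1 : y / (1 + y) < 1 := by rw [div_lt_one hy1]; linarith
    have d1 := (Li_deriv (x := -y) (abs_lt.2 ⟨by linarith [hy.2], by linarith⟩)
      (by linarith)).comp y (hasDerivAt_neg y)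
    have d2 := (Li_deriv (x := y / (1 + y)) (abs_lt.2 ⟨by linarith, by linarith⟩) hq.ne').comp y
      ((hasDerivAt_id y).div ((hasDerivAt_id y).const_add 1) hy1.ne')
    have d3 := (((((hasDerivAt_id y).const_add 1).log hy1.ne')).pow 2).div_const 2
    refine ((d1.add d2).add d3).congr_deriv ?_
    have e : 1 - y / (1 + y) = (1 + y)⁻¹ := by field_simp; ring
    simp only [id, sub_neg_eq_add]
    rw [e, log_inv]
    push_cast
    field_simp
    ring

lemma Li_dup {x : ℝ} (hx : |x| < 1) : Li x + Li (-x) = Li (x ^ 2) / 2 := by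
  have hs := pser_summable (fun n => (Li_coef_abs n).trans (inv_sq_le_one n)) hx
  have h := even_dup hs
  have h2 : Li (-x) = ∑' n : ℕ, (-1 : ℝ) ^ n * (1 / (n : ℝ) ^ 2 * x ^ n) := by
    unfold Li pser
    exact tsum_congr (fun n => by rw [neg_pow]; ring)
  have h3 : Li (x ^ 2) / 2 = 2 * ∑' n : ℕ, (1 / ((2 * n : ℕ) : ℝ) ^ 2 * x ^ (2 * n)) := by
    unfold Li pser
    rw [← tsum_mul_left, ← tsum_div_const]
    refine tsum_congr (fun n => ?_)
    rcases Nat.eq_zero_or_pos n with rfl | hn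
    · simp
    · rw [pow_mul]; push_cast; field_simp
  rw [h2, h3, ← h]
  rfl

lemma A_sinh {u : ℝ} (h0 : 0 < u) (h1 : sinh u < 1) :
    Aser (-1) (sinh u) = u ^ 2 / 2 + Li (1 - exp (-2 * u)) / 2 := by
  have key := const_tool (f := fun u => Aser (-1) (sinh u) - (u ^ 2 / 2 + Li (1 - exp (-2 * u)) / 2))
    h0 ?_ ?_
  · simp [Li_zero, Aser] at key
    simp [Aser]
    linarith
  · refine ContinuousOn.sub ?_ (ContinuousOn.add (by fun_prop) (ContinuousOn.div_const ?_ _))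
    · intro y hy
      have hs0 : 0 ≤ sinh y := sinh_nonneg_iff.2 hy.1
      have hs1 : sinh y < 1 := lt_of_le_of_lt (sinh_le_sinh.2 hy.2) h1
      have hb : |-1 * sinh y ^ 2| < 1 := by
        rw [neg_one_mul, abs_neg, abs_of_nonneg (by positivity)]; nlinarith
      exact ((Aser_deriv hb).comp y (hasDerivAt_sinh y)).continuousAt.continuousWithinAt
    · refine Li_continuousOn.comp (by fun_prop) (fun y hy => ?_)
      have e1 : exp (-2 * y) ≤ 1 := exp_le_one_iff.2 (by linarith [hy.1])
      have e2 := exp_pos (-2 * y)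
      exact ⟨by linarith, by linarith⟩
  · intro y hy
    have e1 : exp (-2 * y) < 1 := by rw [exp_lt_one_iff]; linarith [hy.1]
    have e2 := exp_pos (-2 * y)
    have hs0 : 0 < sinh y := sinh_pos_iff.2 hy.1
    have hs1 : sinh y < 1 := (sinh_lt_sinh.2 hy.2).trans h1
    have d1 := Aser_sinh_deriv hy.1 hs1
    have d2 := (Li_deriv (x := 1 - exp (-2 * y)) (abs_lt.2 ⟨by linarith, by linarith⟩)
      (by linarith)).comp y ((((hasDerivAt_id y).const_mul (-2)).exp).const_sub 1)
    have d3 := ((hasDerivAt_pow 2 y).div_const 2).add (d2.div_const 2)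
    refine (d1.sub d3).congr_deriv ?_
    simp only [id, sub_sub_cancel, log_exp]
    have e3 : exp (-2 * y) = exp (-y) ^ 2 := by rw [← exp_nat_mul]; congr 1; push_cast; ring
    have e4 : exp y = (exp (-y))⁻¹ := by rw [exp_neg, inv_inv]
    have e5 := exp_pos (-y)
    rw [sinh_eq] at hs0 ⊢
    rw [cosh_eq, e3]
    rw [e3] at e1
    rw [e4] at hs0 ⊢
    generalize exp (-y) = q at *
    have h1 : 1 - q ^ 2 ≠ 0 := by linarith
    have h2 : (q⁻¹ - q) / 2 = (1 - q ^ 2) / (2 * q) := by field_simp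
    rw [h2]
    push_cast
    field_simp
    ring

lemma A_neg_half : Aser (-1) (1 / 2) = π ^ 2 / 20 := by
  obtain ⟨r, hr⟩ : ∃ r : ℝ, r = (√5 - 1) / 2 := ⟨_, rfl⟩
  have h5 : √5 ^ 2 = 5 := Real.sq_sqrt (by norm_num)
  have h5a : 2 < √5 := by rw [Real.lt_sqrt (by norm_num)]; norm_num
  have h5b : √5 < 2.24 := by rw [Real.sqrt_lt' (by norm_num)]; norm_num
  have hr2 : r ^ 2 = 1 - r := by rw [hr]; linear_combination h5 / 4
  have hr0 : 0 < r := by rw [hr]; linarith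
  have hr1 : r < 0.62 := by rw [hr]; linarith
  have hr3 : 1 / 2 < r := by rw [hr]; linarith
  have hinv : r⁻¹ = 1 + r := by
    refine inv_eq_of_mul_eq_one_right ?_
    linear_combination hr2
  have hL : log (1 + r) = - log r := by rw [← hinv, log_inv]
  have hL2 : log (r ^ 2) = 2 * log r := by rw [log_pow]; norm_num
  have e1 := Li_euler (x := r ^ 2) (by positivity) (by linarith)
  have e2 := Li_landen hr0 (by linarith)
  have e3 := Li_dup (x := r) (abs_lt.2 ⟨by linarith, by linarith⟩)
  have e4 : r / (1 + r) = r ^ 2 := by rw [← hinv]; field_simp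
  have e5 : 1 - r ^ 2 = r := by linarith
  rw [e4, hL] at e2
  rw [hL2, e5] at e1
  have hl : 0 < -log r := by have := log_neg hr0 (by linarith); linarith
  have hs : sinh (-log r) = 1 / 2 := by
    rw [sinh_eq, neg_neg, exp_neg, exp_log hr0, hinv]; ring
  have e6 := A_sinh hl (by rw [hs]; norm_num)
  have e7 : exp (-2 * -log r) = r ^ 2 := by
    rw [show -2 * -log r = log r + log r by ring, exp_add, exp_log hr0]; ring
  rw [hs, e7, e5] at e6
  rw [e6]
  linarith

/-- `∑ sin(nπ/3)/n² xⁿ` -/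
noncomputable def Bser (x : ℝ) : ℝ := pser (fun n : ℕ => sin (n * (π / 3)) / (n : ℝ) ^ 2) x

lemma B_coef_abs (n : ℕ) : |sin (n * (π / 3)) / (n : ℝ) ^ 2| ≤ 1 / (n : ℝ) ^ 2 := by
  rw [abs_div, abs_of_nonneg (by positivity : (0:ℝ) ≤ (n:ℝ) ^ 2)]
  exact div_le_div_of_nonneg_right (abs_sin_le_one _) (by positivity)

lemma B_continuousOn : ContinuousOn Bser (Set.Icc (-1) 1) := pser_continuousOn B_coef_abs

lemma Bser_zero : Bser 0 = 0 := by simp [Bser, pser_zero]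

lemma sin_diff (t : ℝ) : sin (t + π / 3) - sin t = cos (t + π / 6) := by
  rw [sin_add, cos_add, sin_pi_div_three, cos_pi_div_three, sin_pi_div_six, cos_pi_div_six]
  ring

lemma im_log_aux {t : ℝ} (h0 : 0 < t) (h1 : t < π / 3) :
    pser (fun n : ℕ => n * (sin (n * (π / 3)) / (n : ℝ) ^ 2)) (sin t / sin (t + π / 3)) = t := by
  have hs : 0 < sin t := sin_pos_of_pos_of_lt_pi h0 (by linarith [pi_pos])
  have hs3 : 0 < sin (t + π / 3) := sin_pos_of_pos_of_lt_pi (by linarith [pi_pos]) (by linarith)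
  have hc : 0 < cos (t + π / 6) := cos_pos_of_mem_Ioo ⟨by linarith [pi_pos], by linarith⟩
  have hd := sin_diff t
  obtain ⟨r, hr⟩ : ∃ r, r = sin t / sin (t + π / 3) := ⟨_, rfl⟩
  have hr0 : 0 < r := by rw [hr]; positivity
  have hr1 : r < 1 := by rw [hr, div_lt_one hs3]; linarith
  rw [← hr]
  obtain ⟨z, hz⟩ : ∃ z : ℂ, z = (r : ℂ) * (Complex.cos ((π / 3 : ℝ) : ℂ) + Complex.sin ((π / 3 : ℝ) : ℂ) * Complex.I) := ⟨_, rfl⟩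
  have hzn : ‖z‖ < 1 := by
    rw [hz, norm_mul, ← Complex.exp_mul_I, Complex.norm_exp_ofReal_mul_I, mul_one,
      Complex.norm_real, Real.norm_eq_abs, abs_of_pos hr0]
    exact hr1
  have hsum := Complex.hasSum_im (Complex.hasSum_taylorSeries_neg_log hzn)
  have hterm : ∀ n : ℕ, (z ^ n / n).im = n * (sin (n * (π / 3)) / (n : ℝ) ^ 2) * r ^ n := by
    intro n
    have : z ^ n / n = ((r ^ n / n * cos (n * (π / 3)) : ℝ) : ℂ)
        + ((r ^ n / n * sin (n * (π / 3)) : ℝ) : ℂ) * Complex.I := by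
      rw [hz, mul_pow, Complex.cos_add_sin_mul_I_pow]
      push_cast
      ring
    rw [this]
    simp only [Complex.add_im, Complex.ofReal_im, Complex.mul_im, Complex.ofReal_re, Complex.I_im,
      Complex.I_re]
    rcases Nat.eq_zero_or_pos n with rfl | hn
    · simp
    · field_simp
      ring
  simp only [hterm] at hsum
  have := hsum.tsum_eq
  unfold pser
  rw [this, Complex.neg_im, Complex.log_im]
  have h3 : 0 < sin (π / 3) / sin (t + π / 3) :=
    div_pos (by rw [sin_pi_div_three]; positivity) hs3
  have hz1 : 1 - z = ((sin (π / 3) / sin (t + π / 3) : ℝ) : ℂ)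
      * (Complex.cos ((-t : ℝ) : ℂ) + Complex.sin ((-t : ℝ) : ℂ) * Complex.I) := by
    rw [hz, hr]
    apply Complex.ext
    · simp only [← Complex.ofReal_cos, ← Complex.ofReal_sin, Complex.sub_re, Complex.one_re, Complex.add_re,
        Complex.ofReal_re, Complex.mul_re, Complex.ofReal_im, Complex.I_re, Complex.I_im]
      rw [cos_neg]
      simp only [mul_zero, zero_mul, sub_zero, add_zero]
      have hadd := sin_add t (π / 3)
      have hne := hs3.ne'
      generalize sin (t + π / 3) = S at hadd hne ⊢
      field_simp
      linear_combination hadd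
    · simp only [← Complex.ofReal_cos, ← Complex.ofReal_sin, Complex.sub_im, Complex.one_im, Complex.add_im,
        Complex.ofReal_re, Complex.mul_im, Complex.ofReal_im, Complex.I_re, Complex.I_im]
      rw [sin_neg]
      field_simp
      ring
  rw [hz1, Complex.arg_mul_cos_add_sin_mul_I h3 ⟨by linarith [pi_pos], by linarith [pi_pos]⟩]
  ring

/-- the composite `Bser (r t)` -/
noncomputable def Bc (t : ℝ) : ℝ := Bser (sin t / sin (t + π / 3))

lemma Bc_deriv {t : ℝ} (h0 : 0 < t) (h1 : t < π / 3) :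
    HasDerivAt Bc (t * (cos t / sin t - cos (t + π / 3) / sin (t + π / 3))) t := by
  have hs : 0 < sin t := sin_pos_of_pos_of_lt_pi h0 (by linarith [pi_pos])
  have hs3 : 0 < sin (t + π / 3) := sin_pos_of_pos_of_lt_pi (by linarith [pi_pos]) (by linarith)
  have hc : 0 < cos (t + π / 6) := cos_pos_of_mem_Ioo ⟨by linarith [pi_pos], by linarith⟩
  have hd := sin_diff t
  have hr0 : 0 < sin t / sin (t + π / 3) := by positivity
  have hr1 : sin t / sin (t + π / 3) < 1 := by rw [div_lt_one hs3]; linarith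
  obtain ⟨D, hD, h2, -⟩ := pser_hasDerivAt (fun n => (B_coef_abs n).trans (inv_sq_le_one n))
    (abs_lt.2 ⟨by linarith, hr1⟩)
  rw [im_log_aux h0 h1] at h2
  have h4 := HasDerivAt.comp t hD ((hasDerivAt_sin t).div
    (((hasDerivAt_id t).add_const (π / 3)).sin) hs3.ne')
  refine HasDerivAt.congr_deriv h4 ?_
  simp only [id]
  have hs' := hs.ne'
  have hs3' := hs3.ne'
  generalize sin (t + π / 3) = S at *
  generalize sin t = s at *
  have : D = t * (S / s) := by rw [← h2]; field_simp
  rw [this]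
  field_simp

lemma Bc_cont : ContinuousOn Bc (Set.Icc 0 (π / 3)) := by
  have hs3 : ∀ t ∈ Set.Icc 0 (π / 3), 0 < sin (t + π / 3) := fun t ht =>
    sin_pos_of_pos_of_lt_pi (by linarith [pi_pos, ht.1]) (by linarith [ht.2, pi_pos])
  refine B_continuousOn.comp (ContinuousOn.div (by fun_prop) (by fun_prop)
    (fun t ht => (hs3 t ht).ne')) (fun t ht => ?_)
  have hs : 0 ≤ sin t := sin_nonneg_of_nonneg_of_le_pi ht.1 (by linarith [pi_pos, ht.2])
  have hc : 0 ≤ cos (t + π / 6) := cos_nonneg_of_mem_Icc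
    ⟨by linarith [pi_pos, ht.1], by linarith [ht.2]⟩
  have hd := sin_diff t
  constructor
  · have := div_nonneg hs (hs3 t ht).le
    linarith
  · rw [div_le_one (hs3 t ht)]; linarith

/-- the composite `Aser 1 (sin t)` -/
noncomputable def Ac (t : ℝ) : ℝ := Aser 1 (sin t)

lemma Ac_cont : ContinuousOn Ac (Set.Icc 0 (π / 3)) := by
  intro t ht
  have hs : 0 ≤ sin t := sin_nonneg_of_nonneg_of_le_pi ht.1 (by linarith [pi_pos, ht.2])
  have hc : 0 < cos t := cos_pos_of_mem_Ioo ⟨by linarith [pi_pos, ht.1], by linarith [pi_pos, ht.2]⟩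
  have hb : |1 * sin t ^ 2| < 1 := by
    rw [one_mul, abs_of_nonneg (by positivity)]; nlinarith [sin_sq_add_cos_sq t]
  exact ((Aser_deriv hb).comp t (hasDerivAt_sin t)).continuousAt.continuousWithinAt

lemma B_eq_A : Bser 1 = 2 * Aser 1 (1 / 2) := by
  have hp := pi_pos
  have key := const_tool (f := fun y => Bc (π / 6 + y) - Bc (π / 6 - y) - Ac (π / 6 + y)
    + Ac (π / 6 - y) + Ac (2 * y) - 2 * Ac y) (a := 0) (b := π / 6) (by positivity) ?_ ?_
  · have z1 : Bc 0 = 0 := by simp [Bc, Bser_zero]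
    have z2 : Ac 0 = 0 := by simp [Ac, Aser]
    have z3 : Bc (π / 6 + π / 6) = Bser 1 := by
      have e : sin (π / 3 + π / 3) = sin (π / 3) := by
        rw [← sin_pi_sub]; congr 1; ring
      unfold Bc
      rw [show π / 6 + π / 6 = π / 3 by ring, e, div_self]
      rw [sin_pi_div_three]; positivity
    have z4 : Ac (π / 6) = Aser 1 (1 / 2) := by unfold Ac; rw [sin_pi_div_six]
    have z5 : Ac (2 * (π / 6)) = Ac (π / 6 + π / 6) := by congr 1; ring
    simp only [sub_self, add_zero, sub_zero, mul_zero, z1, z2, z3, z4, z5] at key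
    linarith
  · refine ContinuousOn.sub (ContinuousOn.add (ContinuousOn.add (ContinuousOn.sub
      (ContinuousOn.sub ?_ ?_) ?_) ?_) ?_) (continuousOn_const.mul ?_)
    · exact Bc_cont.comp (by fun_prop) (fun y hy => ⟨by linarith [hy.1], by linarith [hy.2]⟩)
    · exact Bc_cont.comp (by fun_prop) (fun y hy => ⟨by linarith [hy.2], by linarith [hy.1]⟩)
    · exact Ac_cont.comp (by fun_prop) (fun y hy => ⟨by linarith [hy.1], by linarith [hy.2]⟩)
    · exact Ac_cont.comp (by fun_prop) (fun y hy => ⟨by linarith [hy.2], by linarith [hy.1]⟩)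
    · exact Ac_cont.comp (by fun_prop) (fun y hy => ⟨by linarith [hy.1], by linarith [hy.2]⟩)
    · exact Ac_cont.mono (fun y hy => ⟨by linarith [hy.1], by linarith [hy.2]⟩)
  · intro y hy
    have hy0 := hy.1
    have hy1 := hy.2
    have p1 : HasDerivAt (fun y : ℝ => π / 6 + y) 1 y := (hasDerivAt_id y).const_add _
    have p2 : HasDerivAt (fun y : ℝ => π / 6 - y) (-1) y := (hasDerivAt_id y).const_sub _
    have p3 : HasDerivAt (fun y : ℝ => 2 * y) (2 * 1) y := (hasDerivAt_id y).const_mul _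
    have d1 := (Bc_deriv (t := π / 6 + y) (by linarith) (by linarith)).comp y p1
    have d2 := (Bc_deriv (t := π / 6 - y) (by linarith) (by linarith)).comp y p2
    have d3 := HasDerivAt.comp (h₂ := Ac) y (Aser_sin_deriv (t := π / 6 + y) (by linarith) (by linarith)) p1
    have d4 := HasDerivAt.comp (h₂ := Ac) y (Aser_sin_deriv (t := π / 6 - y) (by linarith) (by linarith)) p2
    have d5 := HasDerivAt.comp (h₂ := Ac) y (Aser_sin_deriv (t := 2 * y) (by linarith) (by linarith)) p3
    have d6 : HasDerivAt Ac _ y := Aser_sin_deriv (t := y) (by linarith) (by linarith)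
    refine (((((d1.sub d2).sub d3).add d4).add d5).sub (d6.const_mul 2)).congr_deriv ?_
    have hs : sin y ≠ 0 := (sin_pos_of_pos_of_lt_pi hy0 (by linarith)).ne'
    have hc : cos y ≠ 0 := (cos_pos_of_mem_Ioo ⟨by linarith, by linarith⟩).ne'
    rw [show π / 6 + y + π / 3 = y + π / 2 by ring, show π / 6 - y + π / 3 = π / 2 - y by ring,
      sin_add_pi_div_two, cos_add_pi_div_two, sin_pi_div_two_sub, cos_pi_div_two_sub,
      sin_two_mul, cos_two_mul']
    have e1 : (π / 6 + y) * cos (π / 6 + y) / sin (π / 6 + y)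
      = (π / 6 + y) * (cos (π / 6 + y) / sin (π / 6 + y)) := by ring
    have e2 : (π / 6 - y) * cos (π / 6 - y) / sin (π / 6 - y)
      = (π / 6 - y) * (cos (π / 6 - y) / sin (π / 6 - y)) := by ring
    rw [e1, e2]
    generalize cos (π / 6 + y) / sin (π / 6 + y) = X
    generalize cos (π / 6 - y) / sin (π / 6 - y) = Y
    field_simp
    ring

lemma sin_sq_series :
    ∑' n : ℕ, sin (n * (2 * π / 3)) / (n : ℝ) ^ 2
      = √3 / 2 * (2 * (∑' k : ℕ, 1 / (3 * (k : ℝ) + 1) ^ 2) - 4 * π ^ 2 / 27) := by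
  have hz := hasSum_zeta_two
  have hs : Summable (fun n : ℕ => sin (n * (2 * π / 3)) / (n : ℝ) ^ 2) := by
    refine Summable.of_norm_bounded hz.summable (fun n => ?_)
    rw [Real.norm_eq_abs, abs_div, abs_of_nonneg (by positivity : (0:ℝ) ≤ (n:ℝ) ^ 2)]
    exact div_le_div_of_nonneg_right (abs_sin_le_one _) (by positivity)
  have s0 : sin (2 * π / 3) = √3 / 2 := by
    rw [← sin_pi_sub, ← sin_pi_div_three]; congr 1; ring
  have s1 : sin (2 * (2 * π / 3)) = -(√3 / 2) := by
    rw [← sin_pi_div_three, ← sin_add_pi]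
    rw [show 2 * (2 * π / 3) = π / 3 + π by ring]
  have r1 := Nat.sumByResidueClasses hs 3
  have r2 := Nat.sumByResidueClasses hz.summable 3
  rw [hz.tsum_eq] at r2
  have v0 : ZMod.val (0 : ZMod 3) = 0 := rfl
  have v1 : ZMod.val (1 : ZMod 3) = 1 := rfl
  have v2 : ZMod.val (2 : ZMod 3) = 2 := rfl
  have hF : ∀ g : ZMod 3 → ℝ, ∑ j, g j = g 0 + g 1 + g 2 := fun g => Fin.sum_univ_three g
  rw [hF, v0, v1, v2] at r1 r2
  have a0 : ∑' m : ℕ, 1 / ((0 + 3 * m : ℕ) : ℝ) ^ 2 = π ^ 2 / 54 := by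
    have : ∀ m : ℕ, 1 / ((0 + 3 * m : ℕ) : ℝ) ^ 2 = 1 / 9 * (1 / (m : ℝ) ^ 2) := fun m => by
      push_cast; rw [zero_add, mul_pow]; ring
    simp only [this]
    rw [tsum_mul_left, hz.tsum_eq]; ring
  have a1 : ∑' m : ℕ, 1 / ((1 + 3 * m : ℕ) : ℝ) ^ 2 = ∑' k : ℕ, 1 / (3 * (k : ℝ) + 1) ^ 2 :=
    tsum_congr (fun m => by push_cast; ring)
  have sh : ∀ (j m : ℕ), sin (((j + 3 * m : ℕ) : ℝ) * (2 * π / 3)) = sin (j * (2 * π / 3)) := by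
    intro j m
    rw [← sin_add_nat_mul_two_pi (j * (2 * π / 3)) m]
    congr 1; push_cast; ring
  simp only [sh] at r1
  simp only [Nat.cast_zero, Nat.cast_one, Nat.cast_ofNat, zero_mul, sin_zero, zero_div, tsum_zero,
    one_mul, s0, s1] at r1
  have b1 : ∑' m : ℕ, √3 / 2 / ((1 + 3 * m : ℕ) : ℝ) ^ 2
      = √3 / 2 * ∑' m : ℕ, 1 / ((1 + 3 * m : ℕ) : ℝ) ^ 2 := by
    rw [← tsum_mul_left]; exact tsum_congr (fun m => by ring)
  have b2 : ∑' m : ℕ, -(√3 / 2) / ((2 + 3 * m : ℕ) : ℝ) ^ 2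
      = -(√3 / 2) * ∑' m : ℕ, 1 / ((2 + 3 * m : ℕ) : ℝ) ^ 2 := by
    rw [← tsum_mul_left]; exact tsum_congr (fun m => by ring)
  rw [b1, b2, a1] at r1
  rw [a0, a1] at r2
  rw [r1]
  linear_combination (√3 / 2) * r2

lemma B_one : Bser 1
    = 3 * √3 / 4 * (2 * (∑' k : ℕ, 1 / (3 * (k : ℝ) + 1) ^ 2) - 4 * π ^ 2 / 27) := by
  have hz := hasSum_zeta_two
  have hs : Summable (fun n : ℕ => sin (n * (2 * π / 3)) / (n : ℝ) ^ 2) := by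
    refine Summable.of_norm_bounded hz.summable (fun n => ?_)
    rw [Real.norm_eq_abs, abs_div, abs_of_nonneg (by positivity : (0:ℝ) ≤ (n:ℝ) ^ 2)]
    exact div_le_div_of_nonneg_right (abs_sin_le_one _) (by positivity)
  have h := even_dup hs
  have h1 : ∑' n : ℕ, (-1) ^ n * (sin (n * (2 * π / 3)) / (n : ℝ) ^ 2) = - Bser 1 := by
    unfold Bser pser
    rw [← tsum_neg]
    refine tsum_congr (fun n => ?_)
    have : sin (n * (π / 3)) = - ((-1) ^ n * sin (n * (2 * π / 3))) := by
      rw [← sin_nat_mul_pi_sub]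
      congr 1; ring
    beta_reduce
    rw [this]; ring
  have h2 : ∑' n : ℕ, sin ((2 * n : ℕ) * (2 * π / 3)) / ((2 * n : ℕ) : ℝ) ^ 2
      = -(1/4) * ∑' n : ℕ, sin (n * (2 * π / 3)) / (n : ℝ) ^ 2 := by
    rw [← tsum_mul_left]
    refine tsum_congr (fun n => ?_)
    have : sin (((2 * n : ℕ) : ℝ) * (2 * π / 3)) = - sin (n * (2 * π / 3)) := by
      rw [← sin_neg, ← sin_add_nat_mul_two_pi (-(n * (2 * π / 3))) n]
      congr 1; push_cast; ring
    rw [this]; push_cast; rw [mul_pow]; ring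
  rw [h1, h2] at h
  have := sin_sq_series
  linear_combination (-1) * h + (3/2) * this

lemma poch_succ (a : ℝ) (n : ℕ) : poch a (n + 1) = poch a n * (a + n) := by
  unfold poch; exact ascPochhammer_succ_eval n a

lemma poch_zero (a : ℝ) : poch a 0 = 1 := by simp [poch]

lemma poch_pos {a : ℝ} (ha : 0 < a) (n : ℕ) : 0 < poch a n := by
  induction n with
  | zero => simp [poch_zero]
  | succ n ih => rw [poch_succ]; positivity

lemma poch_quarter (n : ℕ) : poch (1/4) n * (4 * n + 1) = poch (5/4) n := by
  induction n with
  | zero => simp [poch_zero]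
  | succ n ih => rw [poch_succ, poch_succ, ← ih]; push_cast; ring

lemma poch_cbin (n : ℕ) : poch (1/4) n * poch (3/4) n
    = cbin (2 * n) * (poch (1/2) n * (n.factorial : ℝ)) := by
  induction n with
  | zero => simp [poch_zero, cbin_zero]
  | succ n ih =>
    have c1 := cbin_succ (2 * n)
    have c2 := cbin_succ (2 * n + 1)
    rw [show 2 * (n + 1) = 2 * n + 1 + 1 by ring]
    rw [poch_succ, poch_succ, poch_succ, Nat.factorial_succ]
    push_cast at c1 c2 ⊢
    have e2 : cbin (2 * n + 1 + 1) = ((2 * n + 1) + 1 / 2) * cbin (2 * n + 1) / (2 * n + 1 + 1) := by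
      rw [eq_div_iff (by positivity)]; linear_combination c2
    have e1 : cbin (2 * n + 1) = (2 * n + 1 / 2) * cbin (2 * n) / (2 * n + 1) := by
      rw [eq_div_iff (by positivity)]; linear_combination c1
    rw [e2, e1]
    have : poch (1/4) n * (1/4 + n) * (poch (3/4) n * (3/4 + n))
      = (poch (1/4) n * poch (3/4) n) * ((1/4 + n) * (3/4 + n)) := by ring
    rw [this, ih]
    field_simp
    ring

theorem fourF_three_first :
    ∑' n : ℕ, (poch (1/4) n)^3 * poch (3/4) n /
        (poch (1/2) n * (poch (5/4) n)^2 * (n.factorial : ℝ)) * (1/16 : ℝ)^n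
      = (1/2) * (π^2 * (1/10 - 1/(3 * Real.sqrt 3))
          + (9 / (2 * Real.sqrt 3)) * (∑' k : ℕ, 1 / (3 * (k : ℝ) + 1)^2)) := by
  have hterm : ∀ n : ℕ, (poch (1/4) n)^3 * poch (3/4) n /
        (poch (1/2) n * (poch (5/4) n)^2 * (n.factorial : ℝ)) * (1/16 : ℝ)^n
      = cb2 (2 * n) * (1/4 : ℝ) ^ (2 * n) := by
    intro n
    have q1 : 0 < poch (1/4) n := poch_pos (by norm_num) n
    have q2 : 0 < poch (1/2) n := poch_pos (by norm_num) n
    have q3 : (0:ℝ) < n.factorial := by exact_mod_cast n.factorial_pos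
    have : (poch (1/4) n)^3 * poch (3/4) n
      = (poch (1/4) n)^2 * (poch (1/4) n * poch (3/4) n) := by ring
    rw [this, poch_cbin, ← poch_quarter, pow_mul]
    unfold cb2
    push_cast
    norm_num
    field_simp
    ring
  have hs : Summable (fun n : ℕ => cb2 n * (1/4 : ℝ) ^ n) :=
    pser_summable cb2_abs (by rw [abs_of_pos] <;> norm_num)
  have hd := even_dup hs
  have h1 : Aser 1 (1/2) = 1/2 * ∑' n : ℕ, cb2 n * (1/4 : ℝ) ^ n := by
    unfold Aser pser; norm_num
  have h2 : Aser (-1) (1/2) = 1/2 * ∑' n : ℕ, (-1) ^ n * (cb2 n * (1/4 : ℝ) ^ n) := by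
    unfold Aser pser
    congr 1
    refine tsum_congr (fun n => ?_)
    rw [show (-1 * (1/2) ^ 2 : ℝ) = (-1) * (1/4) by norm_num, mul_pow]; ring
  simp only [hterm]
  have hA := B_eq_A
  rw [B_one] at hA
  rw [A_neg_half] at h2
  have h3 : √3 ^ 2 = 3 := Real.sq_sqrt (by norm_num)
  have h3' : √3 ≠ 0 := by positivity
  have e1 : 1 / (3 * √3) = √3 / 9 := by field_simp; linarith
  have e2 : 9 / (2 * √3) = 3 * √3 / 2 := by field_simp; linarith
  rw [e1, e2]
  linear_combination (-1/2) * hd - (1/2) * hA - h1 - h2
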